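/- arXiv:2511.02422 — 8 statements merged into one kernel-verified Lean document; each statement's English description precedes it below -/
import Mathlib

section
/- Let m, K be positive integers, let p : Fin m → ℝ be a vector of p-values, let H₀ ⊆ Fin m be the set of true null hypotheses, and let t₁ ≤ t₂ ≤ … ≤ t_K be real thresholds. Write p_{(k:H₀)} for the k-th smallest value among (p_i)_{i∈H₀}. Suppose that for every k ∈ {1,…,min(K,|H₀|)} one has p_{(k:H₀)} ≥ t_k. Then for every subset S ⊆ Fin m and every k ∈ {1,…,K}, the number of false positives in S satisfies |S ∩ H₀| ≤ |S| − (1 − k + #{i ∈ S : p_i < t_k}); equivalently, |S \ H₀| ≥ max_{k∈{1,…,K}} (1 − k + #{i ∈ S : p_i < t_k}). -/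
/-- The `k`-th smallest value (1-based) among `(p i)_{i ∈ A}`. -/
noncomputable def orderStat {m : ℕ} (p : Fin m → ℝ) (A : Finset (Fin m)) (k : ℕ) : ℝ :=
  ((A.val.map p).sort (· ≤ ·)).getD (k - 1) 0

theorem sorted_countP_aux (l : List ℝ) (hl : l.Pairwise (· ≤ ·)) (n : ℕ) (hn : n < l.length)
    (x : ℝ) (hx : x ≤ l.getD n 0) : l.countP (fun y => decide (y < x)) ≤ n := by
  have h1 : l.countP (fun y => decide (y < x)) = (l.take n).countP (fun y => decide (y < x))
      + (l.drop n).countP (fun y => decide (y < x)) := by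
    rw [← List.countP_append, List.take_append_drop]
  have h2 : (l.drop n).countP (fun y => decide (y < x)) = 0 := by
    rw [List.countP_eq_zero]
    intro y hy
    have hd : (l.drop n).Pairwise (· ≤ ·) := hl.sublist (List.drop_sublist n l)
    rw [List.drop_eq_getElem_cons hn] at hd hy
    rw [List.getD_eq_getElem _ _ hn] at hx
    have : l[n] ≤ y := by
      rcases List.mem_cons.1 hy with h | h
      · exact h.ge
      · exact (List.pairwise_cons.1 hd).1 y h
    simpa using hx.trans this
  have h3 : (l.take n).countP (fun y => decide (y < x)) ≤ (l.take n).length :=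
    List.countP_le_length
  have h4 : (l.take n).length ≤ n := by simp
  omega

theorem null_count_aux {m : ℕ} (p : Fin m → ℝ) (A : Finset (Fin m)) (k : ℕ) (hk : 1 ≤ k)
    (hkA : k ≤ A.card) (x : ℝ) (hx : x ≤ orderStat p A k) :
    (A.filter (fun i => p i < x)).card ≤ k - 1 := by
  have h := sorted_countP_aux ((A.val.map p).sort (· ≤ ·)) (Multiset.pairwise_sort _ _) (k - 1)
    (by simp; omega) x hx
  have e : (A.filter (fun i => p i < x)).card = (A.val.map p).countP (fun y => y < x) := by
    rw [Multiset.countP_map]; rfl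
  rw [e, ← Multiset.sort_eq (A.val.map p) (· ≤ ·), Multiset.coe_countP]
  exact h

/-- Deterministic core of the interpolation post hoc bound of
Blanchard, Neuvial and Roquain (2020): if the null order statistics dominate
the (nondecreasing) template `t` up to `min K |H₀|`, then for every subset `S`
and every `k ∈ {1,…,K}`, `|S ∩ H₀| ≤ |S| − (1 − k + #{i ∈ S : pᵢ < t k})`;
equivalently `|S \ H₀| ≥ max_{k ∈ {1,…,K}} (1 − k + #{i ∈ S : pᵢ < t k})`. -/
theorem interpolation_false_positive_bound
    (m K : ℕ) (hm : 0 < m) (hK : 0 < K)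
    (p : Fin m → ℝ) (H0 : Finset (Fin m)) (t : ℕ → ℝ)
    (ht : ∀ j k, 1 ≤ j → j ≤ k → k ≤ K → t j ≤ t k)
    (hcontrol : ∀ k ∈ Finset.Icc 1 (min K H0.card), t k ≤ orderStat p H0 k) :
    ∀ S : Finset (Fin m),
      (∀ k ∈ Finset.Icc 1 K,
        ((S ∩ H0).card : ℤ) ≤ (S.card : ℤ) -
          (1 - (k : ℤ) + ((S.filter (fun i => p i < t k)).card : ℤ)))
      ∧ (Finset.Icc 1 K).sup' (Finset.nonempty_Icc.mpr hK)
          (fun k => 1 - (k : ℤ) + ((S.filter (fun i => p i < t k)).card : ℤ))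
          ≤ ((S \ H0).card : ℤ) := by
  intro S
  have key : ∀ k ∈ Finset.Icc 1 K,
      1 - (k : ℤ) + ((S.filter (fun i => p i < t k)).card : ℤ) ≤ ((S \ H0).card : ℤ) := by
    intro k hk
    rw [Finset.mem_Icc] at hk
    have h1 : (H0.filter (fun i => p i < t k)).card ≤ k - 1 := by
      by_cases h : k ≤ H0.card
      · exact null_count_aux p H0 k hk.1 h _
          (hcontrol k (Finset.mem_Icc.2 ⟨hk.1, le_min hk.2 h⟩))
      · have := Finset.card_filter_le H0 (fun i => p i < t k)
        omega
    have h2 : S.filter (fun i => p i < t k) ⊆ (S \ H0) ∪ H0.filter (fun i => p i < t k) := by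
      intro i hi
      simp only [Finset.mem_filter, Finset.mem_union, Finset.mem_sdiff] at hi ⊢
      tauto
    have h3 := (Finset.card_le_card h2).trans (Finset.card_union_le _ _)
    omega
  refine ⟨fun k hk => ?_, Finset.sup'_le _ _ key⟩
  have h := key k hk
  have h4 := Finset.card_sdiff_add_card_inter S H0
  omega
end

section
/- Let m, K be positive integers, let (Ω, 𝓕, ℙ) be a probability space, let p : Ω → (Fin m → ℝ) be a random vector of p-values, let H₀ ⊆ Fin m with |H₀| = m₀, and let t₁ ≤ … ≤ t_K be real thresholds. Define JER(t) = ℙ(∃ k ∈ {1,…,min(K,m₀)} : p_{(k:H₀)} < t_k), and for S ⊆ Fin m nonempty define TDP(S) = 1 − |S ∩ H₀|/|S| and the lower bound TDPbar^t(S) = |S|⁻¹ · max_{k∈{1,…,K}} (1 − k + #{i ∈ S : p_i < t_k}). If JER(t) ≤ α for some α ∈ [0,1], then ℙ( for every nonempty S ⊆ Fin m, TDP(S) ≥ TDPbar^t(S) ) ≥ 1 − α. -/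
open MeasureTheory

theorem count_le_aux (l : List ℝ) (hl : l.Pairwise (· ≤ ·)) (n : ℕ) (hn : n < l.length)
    (c : ℝ) (hc : c ≤ l[n]) : l.countP (fun x => decide (x < c)) ≤ n := by
  rw [← List.take_append_drop n l, List.countP_append]
  have h1 : (l.take n).countP (fun x => decide (x < c)) ≤ n :=
    List.countP_le_length.trans (by simp)
  have h2 : (l.drop n).countP (fun x => decide (x < c)) = 0 := by
    rw [List.countP_eq_zero]
    intro a ha
    obtain ⟨j, hj, rfl⟩ := List.getElem_of_mem ha
    simp only [List.getElem_drop, decide_eq_true_eq, not_lt]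
    refine hc.trans ?_
    rcases Nat.eq_zero_or_pos j with h0 | h0
    · subst h0; simp
    · exact List.pairwise_iff_getElem.1 hl n (n + j) hn
        (by simp at hj; omega) (by omega)
  omega

theorem card_filter_aux {m : ℕ} (p : Fin m → ℝ) (A : Finset (Fin m)) (k : ℕ) (hk : 1 ≤ k)
    (c : ℝ) (h : k ≤ A.card → c ≤ orderStat p A k) :
    (A.filter (fun i => p i < c)).card + 1 ≤ k := by
  by_cases hA : k ≤ A.card
  · have h := h hA
    unfold orderStat at h
    have hlen : ((A.val.map p).sort (· ≤ ·)).length = A.card := by simp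
    have hn : k - 1 < ((A.val.map p).sort (· ≤ ·)).length := by omega
    rw [List.getD_eq_getElem _ _ hn] at h
    have := count_le_aux _ (Multiset.pairwise_sort _ _) (k - 1) hn c h
    have e : ((A.val.map p).sort (· ≤ ·)).countP (fun x => decide (x < c))
        = (A.filter (fun i => p i < c)).card := by
      rw [← Multiset.coe_countP, Multiset.sort_eq, Multiset.countP_map]
      rfl
    omega
  · have := Finset.card_filter_le A (fun i => p i < c)
    omega

/-- Interpolation theorem of Blanchard, Neuvial and Roquain (2020):
if the Joint Error Rate of the nondecreasing template `t` is at most `α`,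
then with probability at least `1 − α`, simultaneously over all nonempty
subsets `S`, the true discovery proportion `TDP(S) = 1 − |S ∩ H₀|/|S|` is at
least the interpolation bound
`TDPbar^t(S) = |S|⁻¹ · max_{k ∈ {1,…,K}} (1 − k + #{i ∈ S : pᵢ < t k})`. -/
theorem jer_control_implies_posthoc_tdp_bound
    {Ω : Type*} [MeasurableSpace Ω] (μ : Measure Ω) [IsProbabilityMeasure μ]
    (m K : ℕ) (hm : 0 < m) (hK : 0 < K)
    (p : Ω → Fin m → ℝ) (H0 : Finset (Fin m)) (t : ℕ → ℝ)
    (ht : ∀ j k, 1 ≤ j → j ≤ k → k ≤ K → t j ≤ t k)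
    (α : ℝ) (hα : α ∈ Set.Icc (0 : ℝ) 1)
    (hJER : μ {ω | ∃ k ∈ Finset.Icc 1 (min K H0.card), orderStat (p ω) H0 k < t k}
      ≤ ENNReal.ofReal α) :
    ENNReal.ofReal (1 - α) ≤
      μ {ω | ∀ S : Finset (Fin m), S.Nonempty →
        (((Finset.Icc 1 K).sup' (Finset.nonempty_Icc.mpr hK)
            (fun k => 1 - (k : ℤ) +
              ((S.filter (fun i => p ω i < t k)).card : ℤ)) : ℤ) : ℝ) / S.card
          ≤ 1 - ((S ∩ H0).card : ℝ) / S.card} := by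
  set B := {ω | ∃ k ∈ Finset.Icc 1 (min K H0.card), orderStat (p ω) H0 k < t k} with hB
  have key : ENNReal.ofReal (1 - α) ≤ μ Bᶜ := by
    have h1 : (1 : ENNReal) ≤ μ B + μ Bᶜ := by
      rw [← measure_univ (μ := μ), ← Set.union_compl_self B]
      exact measure_union_le _ _
    rw [ENNReal.ofReal_sub _ hα.1, ENNReal.ofReal_one, tsub_le_iff_left]
    exact h1.trans (by gcongr)
  refine key.trans (measure_mono ?_)
  intro ω hω S hS
  have hpos : (0 : ℝ) < S.card := by exact_mod_cast hS.card_pos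
  rw [div_le_iff₀ hpos, sub_mul, div_mul_cancel₀ _ hpos.ne', one_mul]
  have : (Finset.Icc 1 K).sup' (Finset.nonempty_Icc.mpr hK)
            (fun k => 1 - (k : ℤ) +
              ((S.filter (fun i => p ω i < t k)).card : ℤ))
          ≤ (S.card : ℤ) - ((S ∩ H0).card : ℤ) := by
    apply Finset.sup'_le
    intro k hk
    rw [Finset.mem_Icc] at hk
    have h1 := card_filter_aux (p ω) H0 k hk.1 (t k) (by
      intro hkc
      by_contra hlt
      exact hω ⟨k, Finset.mem_Icc.2 ⟨hk.1, le_min hk.2 hkc⟩, not_le.1 hlt⟩)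
    have h2 : (S.filter (fun i => p ω i < t k)).card ≤
        (S \ H0).card + (H0.filter (fun i => p ω i < t k)).card := by
      refine (Finset.card_le_card ?_).trans (Finset.card_union_le _ _)
      intro i hi
      simp only [Finset.mem_filter, Finset.mem_union, Finset.mem_sdiff] at hi ⊢
      tauto
    have h3 := Finset.card_sdiff_add_card_inter S H0
    omega
  exact_mod_cast this
end

section
/- Let m₀ be a positive integer and let p₁, …, p_{m₀} be independent random variables on a probability space, each uniformly distributed on [0,1]. Let p_{(1)} ≤ … ≤ p_{(m₀)} denote their order statistics. Then for every α ∈ [0,1], ℙ(∃ k ∈ {1,…,m₀} : p_{(k)} < α k / m₀) ≤ α. -/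
open MeasureTheory

lemma simes_count_of_orderStat {m : ℕ} (p : Fin m → ℝ) (k : ℕ) (hk1 : 1 ≤ k) (hkm : k ≤ m)
    (c : ℝ) (h : orderStat p Finset.univ k < c) :
    k ≤ (Finset.univ.filter (fun i => p i < c)).card := by
  classical
  unfold orderStat at h
  set l := ((Finset.univ : Finset (Fin m)).val.map p).sort (· ≤ ·) with hl
  have hlen : l.length = m := by simp [hl]
  have hs : l.Pairwise (· ≤ ·) := Multiset.pairwise_sort _ _
  have hlt : k - 1 < l.length := by omega
  rw [List.getD_eq_getElem _ _ hlt] at h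
  have hcount : l.countP (fun x => decide (x < c))
      = (Finset.univ.filter (fun i => p i < c)).card := by
    have h1 : (l : Multiset ℝ) = (Finset.univ : Finset (Fin m)).val.map p :=
      Multiset.sort_eq _ _
    have h2 : Multiset.countP (fun x => x < c) (l : Multiset ℝ)
        = (Finset.univ.filter (fun i => p i < c)).card := by
      rw [h1, Multiset.countP_map]
      rfl
    rw [← h2, Multiset.coe_countP]
  rw [← hcount, ← List.take_append_drop k l, List.countP_append]
  have h3 : (l.take k).countP (fun x => decide (x < c)) = (l.take k).length := by
    rw [List.countP_eq_length]
    intro a ha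
    obtain ⟨n, hn, rfl⟩ := List.getElem_of_mem ha
    simp only [List.length_take] at hn
    simp only [List.getElem_take, decide_eq_true_eq]
    refine lt_of_le_of_lt ?_ h
    exact hs.sortedLE.getElem_le_getElem_of_le (by omega)
  rw [h3, List.length_take]
  omega

/-- Number of values below `c` among the coordinates in `T`. -/
noncomputable def simesCount {m : ℕ} (T : Finset (Fin m)) (q : T → ℝ) (c : ℝ) : ℕ :=
  ∑ j, if q j < c then 1 else 0

lemma simesCount_measurable {m : ℕ} (T : Finset (Fin m)) (c : ℝ) :
    Measurable (fun q : T → ℝ => simesCount T q c) := by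
  unfold simesCount
  refine Finset.measurable_sum _ fun j _ => ?_
  exact Measurable.ite (measurableSet_lt (measurable_pi_apply j) measurable_const)
    measurable_const measurable_const

/-- The leave-one-out rejection number. -/
noncomputable def simesR {m : ℕ} (T : Finset (Fin m)) (a : ℝ) (q : T → ℝ) : ℕ :=
  Nat.findGreatest (fun k => k ≤ simesCount T q (a * k / m) + 1) m

lemma simesR_measurable {m : ℕ} (T : Finset (Fin m)) (a : ℝ) :
    Measurable (simesR T a) := by
  unfold simesR
  refine measurable_findGreatest fun k _ => ?_
  exact measurableSet_le measurable_const ((simesCount_measurable T _).add measurable_const)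

lemma simesCount_erase {m : ℕ} (p : Fin m → ℝ) (i : Fin m) (c : ℝ) (hi : p i < c) :
    simesCount (Finset.univ.erase i) (fun j => p j) c + 1
      = (Finset.univ.filter (fun i => p i < c)).card := by
  unfold simesCount
  rw [Finset.sum_coe_sort (Finset.univ.erase i) (fun j => if p j < c then 1 else 0),
    Finset.card_filter, ← Finset.sum_erase_add _ _ (Finset.mem_univ i)]
  simp [hi]

/-- Simes (1986) inequality: for `m₀` independent `Uniform[0,1]` p-values,
the probability that some order statistic `p₍ₖ₎` falls strictly below
`α k / m₀` is at most `α`. -/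
theorem simes_inequality
    {Ω : Type*} [MeasurableSpace Ω] (μ : Measure Ω) [IsProbabilityMeasure μ]
    (m₀ : ℕ) (hm₀ : 0 < m₀) (p : Fin m₀ → Ω → ℝ)
    (hmeas : ∀ i, Measurable (p i))
    (hindep : ProbabilityTheory.iIndepFun p μ)
    (hunif : ∀ i, Measure.map (p i) μ = volume.restrict (Set.Icc (0 : ℝ) 1))
    (α : ℝ) (hα : α ∈ Set.Icc (0 : ℝ) 1) :
    μ {ω | ∃ k ∈ Finset.Icc 1 m₀,
        orderStat (fun i => p i ω) Finset.univ k < α * k / m₀}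
      ≤ ENNReal.ofReal α := by
  classical
  obtain ⟨hα0, -⟩ := hα
  have hm : (0 : ℝ) < m₀ := by exact_mod_cast hm₀
  let T : Fin m₀ → Finset (Fin m₀) := fun i => Finset.univ.erase i
  let R : Fin m₀ → Ω → ℕ := fun i ω => simesR (T i) α (fun j => p j ω)
  have hR : ∀ i, Measurable (R i) := fun i =>
    (simesR_measurable (T i) α).comp (measurable_pi_lambda _ fun j => hmeas j)
  have hind : ∀ i, ProbabilityTheory.IndepFun (R i) (p i) μ := by
    intro i
    have h := hindep.indepFun_finset (T i) {i} (by simp [T]) hmeas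
    exact h.comp (simesR_measurable (T i) α)
      (measurable_pi_apply (⟨i, by simp⟩ : ({i} : Finset (Fin m₀))))
  let S : Fin m₀ → ℕ → Set Ω := fun i k => R i ⁻¹' {k} ∩ p i ⁻¹' Set.Iio (α * k / m₀)
  have hS : ∀ i k, MeasurableSet (S i k) := fun i k =>
    (hR i (measurableSet_singleton k)).inter (hmeas i measurableSet_Iio)
  have hSμ : ∀ i k, μ (S i k) ≤ μ (R i ⁻¹' {k}) * ENNReal.ofReal (α * k / m₀) := by
    intro i k
    rw [(hind i).measure_inter_preimage_eq_mul _ _ (measurableSet_singleton k) measurableSet_Iio]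
    gcongr
    rw [← Measure.map_apply (hmeas i) measurableSet_Iio, hunif i,
      Measure.restrict_apply measurableSet_Iio]
    calc volume (Set.Iio (α * k / m₀) ∩ Set.Icc 0 1)
        ≤ volume (Set.Ico 0 (α * k / m₀)) := measure_mono fun x hx => ⟨hx.2.1, hx.1⟩
      _ = _ := by simp
  let f : Ω → ENNReal := fun ω => ∑ i, ∑ k ∈ Finset.Icc 1 m₀,
    (k : ENNReal)⁻¹ * (S i k).indicator 1 ω
  have hf : Measurable f := by
    refine Finset.measurable_sum _ fun i _ => Finset.measurable_sum _ fun k _ => ?_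
    exact (measurable_one.indicator (hS i k)).const_mul _
  have hsub : {ω | ∃ k ∈ Finset.Icc 1 m₀,
      orderStat (fun i => p i ω) Finset.univ k < α * k / m₀} ⊆ {ω | 1 ≤ f ω} := by
    rintro ω ⟨k, hk, hlt⟩
    rw [Finset.mem_Icc] at hk
    have hc := simes_count_of_orderStat _ k hk.1 hk.2 _ hlt
    let P : ℕ → Prop := fun k => k ≤ (Finset.univ.filter (fun i => p i ω < α * k / m₀)).card
    let K := Nat.findGreatest P m₀
    have hKm : K ≤ m₀ := Nat.findGreatest_le _
    have hkK : k ≤ K := Nat.le_findGreatest hk.2 hc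
    have hK1 : 1 ≤ K := hk.1.trans hkK
    have hPK : P K := Nat.findGreatest_spec (P := P) hk.2 hc
    have hmem : ∀ i, p i ω < α * K / m₀ → ω ∈ S i K := by
      intro i hi
      refine ⟨?_, hi⟩
      have hagree : ∀ n, K ≤ n →
          (n ≤ simesCount (T i) (fun j => p j ω) (α * n / m₀) + 1 ↔ P n) := by
        intro n hn
        have : p i ω < α * n / m₀ := lt_of_lt_of_le hi (by gcongr)
        rw [simesCount_erase (fun j => p j ω) i _ this]
      change Nat.findGreatest _ m₀ = K
      rw [Nat.findGreatest_eq_iff]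
      refine ⟨hKm, fun _ => (hagree K le_rfl).2 hPK, fun n hn hnm => ?_⟩
      rw [hagree n hn.le]
      exact Nat.findGreatest_is_greatest hn hnm
    have hK0 : (K : ENNReal) ≠ 0 := by
      simp; omega
    change 1 ≤ f ω
    calc (1 : ENNReal) = (K : ENNReal)⁻¹ * K :=
          (ENNReal.inv_mul_cancel hK0 (ENNReal.natCast_ne_top K)).symm
      _ ≤ (K : ENNReal)⁻¹ * ((Finset.univ.filter (fun i => p i ω < α * K / m₀)).card : ℕ) := by
          gcongr
      _ = ∑ i, (K : ENNReal)⁻¹ * (if p i ω < α * K / m₀ then 1 else 0) := by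
          rw [← Finset.mul_sum, Finset.card_filter]
          push_cast
          rfl
      _ ≤ ∑ i, (K : ENNReal)⁻¹ * (S i K).indicator 1 ω := by
          gcongr with i
          split_ifs with hi
          · simp [hmem i hi]
          · simp
      _ ≤ f ω := by
          refine Finset.sum_le_sum fun i _ => ?_
          exact Finset.single_le_sum
            (f := fun k : ℕ => (k : ENNReal)⁻¹ * (S i k).indicator 1 ω)
            (fun _ _ => zero_le) (Finset.mem_Icc.2 ⟨hK1, hKm⟩)
  calc _ ≤ μ {ω | 1 ≤ f ω} := measure_mono hsub
    _ ≤ ∫⁻ ω, f ω ∂μ := by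
        simpa using mul_meas_ge_le_lintegral (μ := μ) hf 1
    _ = ∑ i, ∑ k ∈ Finset.Icc 1 m₀, (k : ENNReal)⁻¹ * μ (S i k) := by
        rw [lintegral_finsetSum _ fun i _ => Finset.measurable_sum _ fun k _ =>
          (measurable_one.indicator (hS i k)).const_mul _]
        refine Finset.sum_congr rfl fun i _ => ?_
        rw [lintegral_finsetSum _ fun k _ => (measurable_one.indicator (hS i k)).const_mul _]
        refine Finset.sum_congr rfl fun k _ => ?_
        rw [lintegral_const_mul _ (measurable_one.indicator (hS i k)),
          lintegral_indicator_one (hS i k)]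
    _ ≤ ∑ i : Fin m₀, ∑ k ∈ Finset.Icc 1 m₀, μ (R i ⁻¹' {k}) * ENNReal.ofReal (α / m₀) := by
        refine Finset.sum_le_sum fun i _ => Finset.sum_le_sum fun k hk => ?_
        have hk0 : k ≠ 0 := by have := (Finset.mem_Icc.1 hk).1; omega
        refine (mul_le_mul_right (hSμ i k) _).trans_eq ?_
        have : ENNReal.ofReal (α * k / m₀) = k * ENNReal.ofReal (α / m₀) := by
          rw [← ENNReal.ofReal_natCast, ← ENNReal.ofReal_mul (by positivity)]
          congr 1; ring
        rw [this, mul_left_comm, ← mul_assoc (k : ENNReal)⁻¹,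
          ENNReal.inv_mul_cancel (by exact_mod_cast hk0) (ENNReal.natCast_ne_top k), one_mul]
    _ ≤ ∑ i : Fin m₀, ENNReal.ofReal (α / m₀) := by
        refine Finset.sum_le_sum fun i _ => ?_
        rw [← Finset.sum_mul]
        refine mul_le_of_le_one_left (zero_le) ?_
        rw [← measure_biUnion_finset (fun a _ b _ hab =>
            Disjoint.preimage _ (by simpa using hab))
          (fun k _ => hR i (measurableSet_singleton k))]
        exact prob_le_one
    _ = ENNReal.ofReal α := by
        rw [Finset.sum_const, Finset.card_univ, Fintype.card_fin, nsmul_eq_mul,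
          ← ENNReal.ofReal_natCast, ← ENNReal.ofReal_mul (by positivity)]
        congr 1; field_simp
end

section
/- Let m be a positive integer, let p : Ω → (Fin m → ℝ) be a random vector of p-values on a probability space, and let H₀ ⊆ Fin m with |H₀| = m₀ ≥ 1 be such that the null p-values (p_i)_{i∈H₀} are independent and each uniformly distributed on [0,1]. For α ∈ [0,1], consider the Simes template t_k = α k / m for k ∈ {1,…,m}. Then its Joint Error Rate satisfies JER(t) = ℙ(∃ k ∈ {1,…,m₀} : p_{(k:H₀)} < α k / m) ≤ (m₀/m)·α ≤ α. -/
open MeasureTheory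

open ProbabilityTheory in
lemma simes_aux {Ω ι : Type*} [MeasurableSpace Ω] [Fintype ι] [DecidableEq ι] (μ : Measure Ω)
    [IsProbabilityMeasure μ] (X : ι → Ω → ℝ) (hX : ∀ i, Measurable (X i))
    (hindep : iIndepFun X μ) (hunif : ∀ i t, 0 ≤ t → μ (X i ⁻¹' Set.Iio t) ≤ ENNReal.ofReal t)
    (c : ℝ) (hc : 0 ≤ c) :
    μ {ω | ∃ k ∈ Finset.Icc 1 (Fintype.card ι),
        k ≤ ∑ j, if X j ω < c * k then 1 else 0} ≤ (Fintype.card ι : ENNReal) * ENNReal.ofReal c := by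
  set n := Fintype.card ι with hn
  -- count over the other coordinates
  let N : (i : ι) → ({j // j ∈ Finset.univ.erase i} → ℝ) → ℕ → ℕ :=
    fun i x k => ∑ j, if x j < c * k then 1 else 0
  let B : (i : ι) → ℕ → Set ({j // j ∈ Finset.univ.erase i} → ℝ) := fun i k =>
    {x | k ≤ 1 + N i x k ∧ ∀ l ∈ Finset.Icc (k+1) n, 1 + N i x l < l}
  let Y : (i : ι) → Ω → ({j // j ∈ Finset.univ.erase i} → ℝ) := fun i ω j => X j ω
  have hNm : ∀ i k, Measurable (fun x => N i x k) := by
    intro i k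
    refine Finset.measurable_sum _ fun j _ => ?_
    exact Measurable.ite (measurableSet_lt (measurable_pi_apply j) measurable_const)
      measurable_const measurable_const
  have hBm : ∀ i k, MeasurableSet (B i k) := by
    intro i k
    refine MeasurableSet.inter (measurableSet_le measurable_const ((hNm i k).const_add 1)) ?_
    have : {x | ∀ l ∈ Finset.Icc (k+1) n, 1 + N i x l < l}
        = ⋂ l ∈ Finset.Icc (k+1) n, {x | 1 + N i x l < l} := by
      ext x; simp
    change MeasurableSet {x | ∀ l ∈ Finset.Icc (k+1) n, 1 + N i x l < l}
    rw [this]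
    exact Finset.measurableSet_biInter _ fun l _ =>
      measurableSet_lt ((hNm i l).const_add 1) measurable_const
  have hYm : ∀ i, Measurable (Y i) := fun i => measurable_pi_lambda _ fun j => hX j
  have hNY : ∀ i ω (k : ℕ), (∑ j, if X j ω < c * k then 1 else 0)
      = (if X i ω < c * k then 1 else 0) + N i (Y i ω) k := by
    intro i ω k
    rw [← Finset.add_sum_erase _ _ (Finset.mem_univ i)]
    congr 1
    exact (Finset.sum_coe_sort (Finset.univ.erase i) (fun j => if X j ω < c * k then 1 else 0)).symm
  -- independence
  have hprod : ∀ i (k : ℕ), μ (X i ⁻¹' Set.Iio (c * k) ∩ Y i ⁻¹' B i k)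
      = μ (X i ⁻¹' Set.Iio (c * k)) * μ (Y i ⁻¹' B i k) := by
    intro i k
    have h := hindep.indepFun_finset {i} (Finset.univ.erase i) (by simp) hX
    have hφ : Measurable (fun x : (({i} : Finset ι) → ℝ) => x ⟨i, by simp⟩) :=
      measurable_pi_apply (⟨i, by simp⟩ : ({i} : Finset ι))
    have h2 := h.comp hφ measurable_id
    exact h2.measure_inter_preimage_eq_mul _ _ measurableSet_Iio (hBm i k)
  let f : Ω → ENNReal := fun ω => ∑ i, ∑ k ∈ Finset.Icc 1 n,
    (X i ⁻¹' Set.Iio (c * k) ∩ Y i ⁻¹' B i k).indicator (fun _ => (k : ENNReal)⁻¹) ω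
  have hSm : ∀ i (k : ℕ), MeasurableSet (X i ⁻¹' Set.Iio (c * k) ∩ Y i ⁻¹' B i k) := fun i k =>
    (hX i measurableSet_Iio).inter (hYm i (hBm i k))
  have hfm : Measurable f := Finset.measurable_sum _ fun i _ => Finset.measurable_sum _ fun k _ =>
    measurable_const.indicator (hSm i k)
  have hsub : {ω | ∃ k ∈ Finset.Icc 1 n, k ≤ ∑ j, if X j ω < c * k then 1 else 0}
      ⊆ {ω | 1 ≤ f ω} := by
    rintro ω ⟨k0, hk0, hk0'⟩
    let T := (Finset.Icc 1 n).filter (fun k : ℕ => k ≤ ∑ j, if X j ω < c * k then 1 else 0)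
    have hT : T.Nonempty := ⟨k0, Finset.mem_filter.2 ⟨hk0, hk0'⟩⟩
    set R := T.max' hT with hR
    have hRT : R ∈ T := T.max'_mem hT
    obtain ⟨hR1, hR2⟩ := Finset.mem_filter.1 hRT
    have hmax : ∀ l ∈ T, l ≤ R := fun l hl => T.le_max' l hl
    have hRpos : 1 ≤ R := (Finset.mem_Icc.1 hR1).1
    have key : ∀ i, (if X i ω < c * R then (R : ENNReal)⁻¹ else 0) ≤ ∑ k ∈ Finset.Icc 1 n,
        (X i ⁻¹' Set.Iio (c * k) ∩ Y i ⁻¹' B i k).indicator (fun _ => (k : ENNReal)⁻¹) ω := by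
      intro i
      split_ifs with hi
      · refine le_trans ?_ (Finset.single_le_sum (fun _ _ => zero_le) hR1)
        rw [Set.indicator_of_mem]
        refine ⟨hi, ?_, ?_⟩
        · rw [hNY i, if_pos hi] at hR2
          exact hR2
        · intro l hl
          rw [Finset.mem_Icc] at hl
          by_contra hcon
          have hl2 : X i ω < c * l := hi.trans_le (by
            have : (R : ℝ) ≤ l := by exact_mod_cast (by omega : R ≤ l)
            gcongr)
          have : l ∈ T := by
            refine Finset.mem_filter.2 ⟨Finset.mem_Icc.2 ⟨by omega, hl.2⟩, ?_⟩
            rw [hNY i, if_pos hl2]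
            exact not_lt.1 hcon
          have := hmax l this
          omega
      · exact zero_le
    refine le_trans ?_ (Finset.sum_le_sum fun i _ => key i)
    have e : (∑ i, if X i ω < c * R then (R : ENNReal)⁻¹ else 0)
        = ((∑ i, if X i ω < c * R then 1 else 0 : ℕ) : ENNReal) * (R : ENNReal)⁻¹ := by
      push_cast
      rw [Finset.sum_mul]
      refine Finset.sum_congr rfl fun i _ => ?_
      split_ifs <;> simp
    rw [e]
    calc (1 : ENNReal) = R * (R : ENNReal)⁻¹ :=
          (ENNReal.mul_inv_cancel (by exact_mod_cast (by omega : R ≠ 0)) (by simp)).symm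
      _ ≤ _ := by gcongr
  calc _ ≤ μ {ω | 1 ≤ f ω} := measure_mono hsub
    _ ≤ ∫⁻ ω, f ω ∂μ := by simpa using mul_meas_ge_le_lintegral (μ := μ) hfm 1
    _ = ∑ i, ∑ k ∈ Finset.Icc 1 n, (k : ENNReal)⁻¹ *
          μ (X i ⁻¹' Set.Iio (c * k) ∩ Y i ⁻¹' B i k) := by
        rw [lintegral_finsetSum _ fun i _ => Finset.measurable_sum _ fun k _ =>
          measurable_const.indicator (hSm i k)]
        refine Finset.sum_congr rfl fun i _ => ?_
        rw [lintegral_finsetSum _ fun k _ => measurable_const.indicator (hSm i k)]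
        refine Finset.sum_congr rfl fun k _ => ?_
        rw [lintegral_indicator_const (hSm i k)]
    _ ≤ ∑ i : ι, ENNReal.ofReal c := by
        refine Finset.sum_le_sum fun i _ => ?_
        calc _ ≤ ∑ k ∈ Finset.Icc 1 n, ENNReal.ofReal c * μ (Y i ⁻¹' B i k) := by
              refine Finset.sum_le_sum fun k hk => ?_
              have hk1 : k ≠ 0 := by have := (Finset.mem_Icc.1 hk).1; omega
              rw [hprod, ← mul_assoc]
              gcongr
              calc (k : ENNReal)⁻¹ * μ (X i ⁻¹' Set.Iio (c * k))
                  ≤ (k : ENNReal)⁻¹ * ENNReal.ofReal (c * k) := by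
                    gcongr; exact hunif i _ (by positivity)
                _ = ENNReal.ofReal c := by
                    rw [ENNReal.ofReal_mul hc, ENNReal.ofReal_natCast, mul_comm, mul_assoc,
                      ENNReal.mul_inv_cancel (by exact_mod_cast hk1) (by simp), mul_one]
          _ = ENNReal.ofReal c * μ (⋃ k ∈ Finset.Icc 1 n, Y i ⁻¹' B i k) := by
              rw [← Finset.mul_sum, measure_biUnion_finset _ fun k _ => hYm i (hBm i k)]
              have hlt : ∀ k ∈ Finset.Icc 1 n, ∀ l ∈ Finset.Icc 1 n, k < l →
                  Disjoint (Y i ⁻¹' B i k) (Y i ⁻¹' B i l) := by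
                intro k hk l hl hkl
                rw [Set.disjoint_left]
                rintro ω ⟨_, h1⟩ ⟨h2, _⟩
                have := h1 l (Finset.mem_Icc.2 ⟨hkl, (Finset.mem_Icc.1 hl).2⟩)
                omega
              intro k hk l hl hkl
              rcases lt_or_gt_of_ne hkl with h | h
              · exact hlt k hk l hl h
              · exact (hlt l hl k hk h).symm
          _ ≤ ENNReal.ofReal c * 1 := by gcongr; exact prob_le_one
          _ = _ := mul_one _
    _ = _ := by simp [hn]

lemma orderStat_lt_imp {m : ℕ} (p : Fin m → ℝ) (A : Finset (Fin m)) (k : ℕ) (t : ℝ)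
    (hk : k ∈ Finset.Icc 1 A.card) (h : orderStat p A k < t) :
    k ≤ ∑ j : {i // i ∈ A}, if p j < t then 1 else 0 := by
  obtain ⟨hk1, hk2⟩ := Finset.mem_Icc.1 hk
  rw [Finset.sum_coe_sort A (fun j => if p j < t then 1 else 0), ← Finset.card_filter]
  unfold orderStat at h
  set l := (A.val.map p).sort (· ≤ ·) with hl
  have hlen : l.length = A.card := by simp [hl]
  have hcount : (A.filter (fun j => p j < t)).card = l.countP (fun x => x < t) := by
    rw [← Multiset.coe_countP, hl, Multiset.sort_eq, Multiset.countP_map]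
    rfl
  rw [hcount]
  have hsorted : l.Pairwise (· ≤ ·) := Multiset.pairwise_sort _ _
  rw [List.getD_eq_getElem _ _ (by omega)] at h
  have h1 : (l.take k).countP (fun x => x < t) = (l.take k).length := by
    rw [List.countP_eq_length]
    intro a ha
    obtain ⟨i, hi, rfl⟩ := List.mem_iff_getElem.1 ha
    rw [List.getElem_take]
    have hi' : i < k ∧ i < l.length := by simpa using hi
    have : l[i]'hi'.2 ≤ l[k-1]'(by omega) := by
      rcases Nat.lt_or_ge i (k-1) with h' | h'
      · exact List.pairwise_iff_getElem.1 hsorted _ _ _ _ h'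
      · have : i = k - 1 := by omega
        subst this; exact le_rfl
    simpa using this.trans_lt h
  have h2 := (List.take_sublist k l).countP_le (p := fun x => decide (x < t))
  have h3 : (l.take k).length = k := by simp; omega
  omega

/-- The Simes template `t k = α k / m` controls the Joint Error Rate at level
`(m₀/m)·α ≤ α` when the null p-values `(pᵢ)_{i ∈ H₀}` are independent and
`Uniform[0,1]`. -/
theorem simes_template_controls_JER
    {Ω : Type*} [MeasurableSpace Ω] (μ : Measure Ω) [IsProbabilityMeasure μ]
    (m : ℕ) (hm : 0 < m) (p : Ω → Fin m → ℝ)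
    (H0 : Finset (Fin m)) (m₀ : ℕ) (hcard : H0.card = m₀) (hm₀ : 1 ≤ m₀)
    (hmeas : ∀ i, Measurable (fun ω => p ω i))
    (hindep : ProbabilityTheory.iIndepFun
      (fun (i : {i // i ∈ H0}) (ω : Ω) => p ω i) μ)
    (hunif : ∀ i ∈ H0, Measure.map (fun ω => p ω i) μ = volume.restrict (Set.Icc (0 : ℝ) 1))
    (α : ℝ) (hα : α ∈ Set.Icc (0 : ℝ) 1) :
    μ {ω | ∃ k ∈ Finset.Icc 1 m₀, orderStat (p ω) H0 k < α * k / m}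
        ≤ ENNReal.ofReal ((m₀ / m : ℝ) * α)
      ∧ (m₀ / m : ℝ) * α ≤ α := by
  obtain ⟨h0, h1⟩ := hα
  have hmR : (0 : ℝ) < m := by exact_mod_cast hm
  have hle : (m₀ : ℝ) ≤ m := by
    rw [← hcard]; exact_mod_cast (by simpa using Finset.card_le_univ H0)
  refine ⟨?_, mul_le_of_le_one_left h0 (by rw [div_le_one hmR]; exact hle)⟩
  have hmain := simes_aux μ (fun (i : {i // i ∈ H0}) (ω : Ω) => p ω i) (fun i => hmeas i) hindep
    (by
      intro i t ht
      rw [← Measure.map_apply (hmeas i) measurableSet_Iio, hunif i i.2,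
        Measure.restrict_apply measurableSet_Iio]
      calc volume (Set.Iio t ∩ Set.Icc 0 1) ≤ volume (Set.Ico 0 t) :=
            measure_mono fun x hx => ⟨hx.2.1, hx.1⟩
        _ = _ := by simp)
    (α / m) (by positivity)
  rw [Fintype.card_coe, hcard] at hmain
  have e : ENNReal.ofReal ((m₀ / m : ℝ) * α) = (m₀ : ENNReal) * ENNReal.ofReal (α / m) := by
    rw [← ENNReal.ofReal_natCast, ← ENNReal.ofReal_mul (by positivity)]
    congr 1; ring
  rw [e]
  refine le_trans (measure_mono ?_) hmain
  rintro ω ⟨k, hk, hlt⟩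
  refine ⟨k, hk, ?_⟩
  have := orderStat_lt_imp (p ω) H0 k (α / m * k) (by rw [hcard]; exact hk)
    (by rwa [div_mul_eq_mul_div])
  exact this
end

section
/- Let m be a positive integer, α ∈ (0,1), and p : Fin m → ℝ a vector of p-values with order statistics p_{(1)} ≤ … ≤ p_{(m)}. Define the Hommel value h(α) = max{ i ∈ {0,1,…,m} : for all k ∈ {1,…,i}, p_{(m − i + k)} > α k / i } (with h(α) = 0 when no positive i qualifies). Let H₀ ⊆ Fin m with |H₀| = m₀ ≥ 1, and suppose the Simes event holds for the nulls: p_{(k:H₀)} > α k / m₀ for every k ∈ {1,…,m₀}. Then m₀ ≤ h(α). -/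
open scoped Classical in
/-- The Hommel (1988) value: the largest `i ∈ {0,…,m}` such that the `i`
largest p-values exceed the scaled Simes line `α k / i` for all `k ≤ i`
(`0` if no positive `i` qualifies; `i = 0` always qualifies vacuously). -/
noncomputable def hommelValue (m : ℕ) (α : ℝ) (p : Fin m → ℝ) : ℕ :=
  ((Finset.range (m + 1)).filter
    (fun i => ∀ k ∈ Finset.Icc 1 i, α * k / i < orderStat p Finset.univ (m - i + k))).sup id

theorem getD_le_of_sublist {l₁ l₂ : List ℝ} (h : l₁.Sublist l₂) :
    l₂.Pairwise (· ≤ ·) → ∀ i < l₁.length,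
      l₁.getD i 0 ≤ l₂.getD (l₂.length - l₁.length + i) 0 := by
  induction h with
  | slnil => intro _ i hi; simp at hi
  | @cons l₁ l₂ a h ih =>
    intro hs i hi
    have hl := h.length_le
    have e : (a :: l₂).length - l₁.length + i = (l₂.length - l₁.length + i) + 1 := by
      simp only [List.length_cons]; omega
    rw [e, List.getD_cons_succ]
    exact ih (List.pairwise_cons.1 hs).2 i hi
  | @cons_cons l₁ l₂ a h ih =>
    intro hs i hi
    have hl := h.length_le
    rw [List.pairwise_cons] at hs
    cases i with
    | zero =>
      have hlt : (a :: l₂).length - (a :: l₁).length + 0 < (a :: l₂).length := by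
        simp only [List.length_cons]; omega
      rw [List.getD_cons_zero, List.getD_eq_getElem _ _ hlt]
      rcases List.mem_cons.1 (List.getElem_mem hlt) with h' | h'
      · exact h'.ge
      · exact hs.1 _ h'
    | succ i =>
      have e : (a :: l₂).length - (a :: l₁).length + (i + 1)
          = (l₂.length - l₁.length + i) + 1 := by
        simp only [List.length_cons]; omega
      rw [e, List.getD_cons_succ, List.getD_cons_succ]
      exact ih hs.2 i (by simpa using hi)

/-- On the Simes event for the nulls (`p₍ₖ:H₀₎ > α k / m₀` for all
`k ∈ {1,…,m₀}`), the number of true nulls is at most the Hommel value: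
`m₀ ≤ h(α)`. -/
theorem card_nulls_le_hommelValue_on_simes_event
    (m : ℕ) (hm : 0 < m) (α : ℝ) (hα : α ∈ Set.Ioo (0 : ℝ) 1)
    (p : Fin m → ℝ) (H0 : Finset (Fin m)) (m₀ : ℕ) (hcard : H0.card = m₀) (hm₀ : 1 ≤ m₀)
    (hSimes : ∀ k ∈ Finset.Icc 1 m₀, α * k / m₀ < orderStat p H0 k) :
    m₀ ≤ hommelValue m α p := by
  have hle : m₀ ≤ m := by
    rw [← hcard]; simpa using Finset.card_le_univ H0
  unfold hommelValue
  refine Finset.le_sup (f := id) ?_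
  simp only [Finset.mem_filter]
  refine ⟨Finset.mem_range.2 (by omega), ?_⟩
  intro k hk
  refine (hSimes k hk).trans_le ?_
  rw [Finset.mem_Icc] at hk
  have hsub : (((H0.val.map p).sort (· ≤ ·))).Sublist
      (((Finset.univ : Finset (Fin m)).val.map p).sort (· ≤ ·)) := by
    refine List.sublist_of_subperm_of_pairwise ?_ (Multiset.pairwise_sort _ _)
      (Multiset.pairwise_sort _ _)
    rw [← Multiset.coe_le, Multiset.sort_eq, Multiset.sort_eq]
    exact Multiset.map_le_map (Finset.val_le_iff.2 (Finset.subset_univ H0))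
  have := getD_le_of_sublist hsub (Multiset.pairwise_sort _ _) (k - 1)
    (by simp [hcard]; omega)
  unfold orderStat
  have e : m - m₀ + k - 1 = m - m₀ + (k - 1) := by omega
  rw [e]
  simpa [hcard] using this
end

section
/- Let m be a positive integer, α ∈ (0,1), and p : Fin m → ℝ a vector of p-values. Let H₀ ⊆ Fin m with |H₀| = m₀ ≥ 1, let h(α) = max{ i ∈ {0,…,m} : for all k ∈ {1,…,i}, p_{(m−i+k)} > αk/i } be the Hommel value, and suppose the Simes event holds for the nulls: p_{(k:H₀)} > αk/m₀ for all k ∈ {1,…,m₀} (in particular h(α) ≥ m₀ ≥ 1). Then for the ARI threshold family t_k = αk/h(α) (k ∈ {1,…,m}) and for every nonempty S ⊆ Fin m, |S ∩ H₀| ≤ |S| − max_{k∈{1,…,m}} (1 − k + #{i ∈ S : p_i < αk/h(α)}); that is, the ARI post hoc bound is valid simultaneously over all subsets on the Simes event. -/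
theorem ari_list (c : ℝ) : ∀ (l : List ℝ) (k : ℕ), l.Pairwise (· ≤ ·) → k < l.length →
    (c < l.getD k 0 ↔ l.countP (fun x => decide (x ≤ c)) ≤ k) := by
  intro l
  induction l with
  | nil => intro k _ hk; simp at hk
  | cons a t ih =>
    intro k hs hk
    rw [List.pairwise_cons] at hs
    by_cases hac : a ≤ c
    · rw [List.countP_cons_of_pos (by simpa using hac)]
      cases k with
      | zero => simp [hac]
      | succ k =>
        have := ih k hs.2 (by simpa using hk)
        simp only [List.getD_cons_succ]
        rw [this]; omega
    · have hz : t.countP (fun x => decide (x ≤ c)) = 0 := by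
        rw [List.countP_eq_zero]
        intro x hx
        have := hs.1 x hx
        simp only [decide_eq_true_eq]; linarith
      rw [List.countP_cons_of_neg (by simpa using hac), hz]
      cases k with
      | zero => simpa using hac
      | succ k =>
        have := ih k hs.2 (by simpa using hk)
        simp only [List.getD_cons_succ]
        rw [this, hz]; simp

theorem ari_orderStat {m : ℕ} (p : Fin m → ℝ) (A : Finset (Fin m)) (c : ℝ) (k : ℕ)
    (h1 : 1 ≤ k) (h2 : k ≤ A.card) :
    c < orderStat p A k ↔ (A.filter (fun i => p i ≤ c)).card < k := by
  unfold orderStat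
  rw [ari_list c _ (k-1) (Multiset.pairwise_sort _ _) (by simp; omega)]
  have : ((A.val.map p).sort (· ≤ ·)).countP (fun x => decide (x ≤ c))
      = (A.filter (fun i => p i ≤ c)).card := by
    have h : Multiset.countP (fun x => x ≤ c) (((A.val.map p).sort (· ≤ ·) : List ℝ) : Multiset ℝ)
      = (A.filter (fun i => p i ≤ c)).card := by
      rw [Multiset.sort_eq, Multiset.countP_map]; rfl
    rw [← h, Multiset.coe_countP]
  rw [this]; omega

/-- Validity of the ARI post hoc bound (Rosenblatt et al., 2018) on the Simes
event: with the ARI thresholds `t k = α k / h(α)`, for every nonempty subset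
`S`, the number of false positives in `S` satisfies
`|S ∩ H₀| ≤ |S| − max_{k ∈ {1,…,m}} (1 − k + #{i ∈ S : pᵢ < α k / h(α)})`. -/
theorem ARI_posthoc_bound_on_simes_event
    (m : ℕ) (hm : 0 < m) (α : ℝ) (hα : α ∈ Set.Ioo (0 : ℝ) 1)
    (p : Fin m → ℝ) (H0 : Finset (Fin m)) (m₀ : ℕ) (hcard : H0.card = m₀) (hm₀ : 1 ≤ m₀)
    (hSimes : ∀ k ∈ Finset.Icc 1 m₀, α * k / m₀ < orderStat p H0 k) :
    ∀ S : Finset (Fin m), S.Nonempty →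
      ((S ∩ H0).card : ℤ) ≤ (S.card : ℤ) -
        (Finset.Icc 1 m).sup' (Finset.nonempty_Icc.mpr hm)
          (fun k => 1 - (k : ℤ) +
            ((S.filter (fun i => p i < α * k / hommelValue m α p)).card : ℤ)) := by
  intro S _
  have hle : H0.card ≤ m := by simpa using Finset.card_le_univ H0
  have hmh : m₀ ≤ hommelValue m α p := by
    unfold hommelValue
    refine Finset.le_sup (f := id) (b := m₀) ?_
    simp only [Finset.mem_filter, Finset.mem_range]
    refine ⟨by omega, fun k hk => ?_⟩
    have h1 := hSimes k hk
    rw [Finset.mem_Icc] at hk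
    rw [ari_orderStat p H0 _ k hk.1 (by omega)] at h1
    rw [ari_orderStat p _ _ _ (by omega) (by simp; omega)]
    have hsub : (Finset.univ.filter (fun i => p i ≤ α * k / m₀)) ⊆
        H0ᶜ ∪ H0.filter (fun i => p i ≤ α * k / m₀) := by
      intro i hi
      simp only [Finset.mem_filter, Finset.mem_union, Finset.mem_compl, Finset.mem_univ] at *
      tauto
    have h3 := (Finset.card_le_card hsub).trans (Finset.card_union_le _ _)
    rw [Finset.card_compl, Fintype.card_fin] at h3
    omega
  rw [le_sub_comm]
  refine Finset.sup'_le _ _ fun k hk => ?_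
  rw [Finset.mem_Icc] at hk
  set h := hommelValue m α p
  have hc : α * k / h ≤ α * k / m₀ := by
    have := hα.1
    have h0 : (0:ℝ) < m₀ := by exact_mod_cast hm₀
    have h1 : (m₀:ℝ) ≤ h := by exact_mod_cast hmh
    gcongr
  have hH : (H0.filter (fun i => p i ≤ α * k / m₀)).card < k := by
    by_cases hkm : k ≤ m₀
    · exact (ari_orderStat p H0 _ k hk.1 (by omega)).1 (hSimes k (Finset.mem_Icc.2 ⟨hk.1, hkm⟩))
    · have := Finset.card_filter_le H0 (fun i => p i ≤ α * k / m₀)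
      omega
  have hsub : S.filter (fun i => p i < α * k / h) ⊆
      (S \ H0) ∪ H0.filter (fun i => p i ≤ α * k / m₀) := by
    intro i hi
    simp only [Finset.mem_filter, Finset.mem_union, Finset.mem_sdiff] at *
    by_cases hi0 : i ∈ H0
    · exact Or.inr ⟨hi0, (hi.2.le.trans hc)⟩
    · exact Or.inl ⟨hi.1, hi0⟩
  have h3 := (Finset.card_le_card hsub).trans (Finset.card_union_le _ _)
  have h4 := Finset.card_sdiff_add_card_inter S H0
  omega
end

section
/- Let B be a positive integer, let (Y₁, …, Y_B) be an exchangeable family of random variables taking values in a measurable space E (i.e., the joint distribution of (Y_{σ(1)}, …, Y_{σ(B)}) equals that of (Y₁, …, Y_B) for every permutation σ of {1,…,B}), and let f : E → ℝ be measurable. Then for every α ∈ [0,1], ℙ( #{ b ∈ {1,…,B} : f(Y_b) ≤ f(Y₁) } ≤ ⌊αB⌋ ) ≤ ⌊αB⌋ / B ≤ α. -/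
open MeasureTheory

theorem rank_count_aux {B : ℕ} (g : Fin B → ℝ) (k : ℕ) :
    (Finset.univ.filter (fun c => (Finset.univ.filter (fun b => g b ≤ g c)).card ≤ k)).card ≤ k := by
  set S := Finset.univ.filter (fun c => (Finset.univ.filter (fun b => g b ≤ g c)).card ≤ k) with hS
  rcases S.eq_empty_or_nonempty with h | h
  · simp [h]
  · obtain ⟨c, hc, hmax⟩ := S.exists_max_image g h
    have hc' : (Finset.univ.filter (fun b => g b ≤ g c)).card ≤ k := by
      rw [hS] at hc
      exact (Finset.mem_filter.mp hc).2
    refine le_trans (Finset.card_le_card ?_) hc'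
    intro b hb
    exact Finset.mem_filter.mpr ⟨Finset.mem_univ _, hmax b hb⟩

theorem rank_meas_aux {E : Type*} [MeasurableSpace E] {B : ℕ} (f : E → ℝ) (hf : Measurable f)
    (k : ℕ) (c : Fin B) :
    MeasurableSet {y : Fin B → E | (Finset.univ.filter (fun b => f (y b) ≤ f (y c))).card ≤ k} := by
  have h : Measurable (fun y : Fin B → E =>
      (Finset.univ.filter (fun b => f (y b) ≤ f (y c))).card) := by
    simp only [Finset.card_filter]
    refine Finset.measurable_sum _ fun b _ => ?_
    refine Measurable.ite ?_ measurable_const measurable_const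
    exact measurableSet_le (hf.comp (measurable_pi_apply b)) (hf.comp (measurable_pi_apply c))
  exact h measurableSet_Iic

/-- Rank-based lemma underlying permutation/randomization calibration
(Blanchard, Neuvial and Roquain, 2020): if `(Y₁,…,Y_B)` is exchangeable,
the observed statistic `f(Y₁)` falls among the `⌊αB⌋` smallest of the `B`
values with probability at most `⌊αB⌋/B ≤ α`. -/
theorem exchangeable_rank_bound
    {Ω E : Type*} [MeasurableSpace Ω] [MeasurableSpace E]
    (μ : Measure Ω) [IsProbabilityMeasure μ]
    (B : ℕ) (hB : 0 < B) (Y : Fin B → Ω → E)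
    (hmeas : ∀ b, Measurable (Y b))
    (hexch : ∀ σ : Equiv.Perm (Fin B),
      Measure.map (fun ω => fun b => Y (σ b) ω) μ = Measure.map (fun ω => fun b => Y b ω) μ)
    (f : E → ℝ) (hf : Measurable f)
    (α : ℝ) (hα : α ∈ Set.Icc (0 : ℝ) 1) :
    μ {ω | (Finset.univ.filter (fun b => f (Y b ω) ≤ f (Y ⟨0, hB⟩ ω))).card ≤ ⌊α * B⌋₊}
        ≤ ENNReal.ofReal ((⌊α * B⌋₊ : ℝ) / B)
      ∧ (⌊α * B⌋₊ : ℝ) / B ≤ α := by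
  have hB' : (0 : ℝ) < B := by exact_mod_cast hB
  refine ⟨?_, ?_⟩
  swap
  · rw [div_le_iff₀ hB']
    exact Nat.floor_le (mul_nonneg hα.1 hB'.le)
  generalize ⌊α * B⌋₊ = k
  let A : Fin B → Set (Fin B → E) := fun c =>
    {y | (Finset.univ.filter (fun b => f (y b) ≤ f (y c))).card ≤ k}
  have hA : ∀ c, MeasurableSet (A c) := fun c => rank_meas_aux f hf k c
  have hY : Measurable (fun ω => fun b => Y b ω) := measurable_pi_lambda _ hmeas
  set ν := Measure.map (fun ω => fun b => Y b ω) μ with hν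
  have : IsProbabilityMeasure ν := Measure.isProbabilityMeasure_map hY.aemeasurable
  let z : Fin B := ⟨0, hB⟩
  have h0 : μ {ω | (Finset.univ.filter (fun b => f (Y b ω) ≤ f (Y ⟨0, hB⟩ ω))).card ≤ k}
      = ν (A z) := by
    rw [hν, Measure.map_apply hY (hA z)]
    rfl
  have hc : ∀ c, ν (A c) = ν (A z) := by
    intro c
    have hYs : Measurable (fun ω => fun b => Y (Equiv.swap z c b) ω) :=
      measurable_pi_lambda _ fun b => hmeas _
    conv_rhs => rw [← hexch (Equiv.swap z c), Measure.map_apply hYs (hA z)]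
    rw [hν, Measure.map_apply hY (hA c)]
    congr 1
    ext ω
    simp only [A, Set.mem_preimage, Set.mem_setOf_eq, Equiv.swap_apply_left]
    have : (Finset.univ.filter (fun b => f (Y b ω) ≤ f (Y c ω))).card
        = (Finset.univ.filter (fun b => f (Y (Equiv.swap z c b) ω) ≤ f (Y c ω))).card := by
      rw [Finset.card_filter, Finset.card_filter]
      exact (Equiv.sum_comp (Equiv.swap z c)
        (fun b => if f (Y b ω) ≤ f (Y c ω) then 1 else 0)).symm
    rw [this]
  have hsum : (B : ENNReal) * ν (A z) ≤ k := by
    calc (B : ENNReal) * ν (A z) = ∑ c, ν (A c) := by simp [hc]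
      _ = ∑ c, ∫⁻ y, (A c).indicator 1 y ∂ν := by
          simp only [lintegral_indicator_one (hA _)]
      _ = ∫⁻ y, ∑ c, (A c).indicator 1 y ∂ν :=
          (lintegral_finsetSum _ fun c _ => measurable_one.indicator (hA c)).symm
      _ ≤ ∫⁻ _, (k : ENNReal) ∂ν := by
          refine lintegral_mono fun y => ?_
          have := rank_count_aux (fun b => f (y b)) k
          rw [Finset.card_filter] at this
          have h2 : ((∑ c : Fin B, if (Finset.univ.filter
            (fun b => f (y b) ≤ f (y c))).card ≤ k then 1 else 0 : ℕ) : ENNReal) ≤ k := by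
            exact_mod_cast this
          simpa [Set.indicator_apply, A] using h2
      _ = k := by simp
  rw [h0, ENNReal.ofReal_div_of_pos hB', ENNReal.ofReal_natCast, ENNReal.ofReal_natCast,
    ENNReal.le_div_iff_mul_le (Or.inl (by exact_mod_cast hB.ne')) (Or.inl (by simp)), mul_comm]
  exact hsum
end

section
/- Let m, B be positive integers and α ∈ (0,1). Let p⁽¹⁾, …, p⁽ᴮ⁾ be random vectors in [0,1]^m, defined on a common probability space, that form an exchangeable family (the joint law is invariant under permutations of the B vectors), where p⁽¹⁾ is the observed vector of null p-values. For a vector y ∈ [0,1]^m with order statistics y_{(1)} ≤ … ≤ y_{(m)}, define λ(y) = min_{k∈{1,…,m}} m·y_{(k)}/k. Let λ* be the ⌊αB⌋-th smallest value among λ(p⁽¹⁾), …, λ(p⁽ᴮ⁾) (and λ* = 0 if ⌊αB⌋ = 0). Then ℙ( ∃ k ∈ {1,…,m} : p⁽¹⁾_{(k)} < λ*·k/m ) ≤ α. -/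
open MeasureTheory

/-- The calibration statistic of the calibrated Simes method:
`λ(y) = min_{k ∈ {1,…,m}} m · y₍ₖ₎ / k`. -/
noncomputable def lambdaFun (m : ℕ) (y : Fin m → ℝ) : ℝ :=
  ⨅ k : Fin m, (m : ℝ) * orderStat y Finset.univ ((k : ℕ) + 1) / ((k : ℕ) + 1)

theorem aux_sorted (t : ℝ) : ∀ (l : List ℝ), l.Pairwise (· ≤ ·) → ∀ k, k < l.length →
    (l.getD k 0 ≤ t ↔ k < l.countP (fun x => decide (x ≤ t))) := by
  intro l
  induction l with
  | nil => intro _ k hk; simp at hk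
  | cons a l ih =>
    intro hl k hk
    rw [List.pairwise_cons] at hl
    obtain ⟨h1, h2⟩ := hl
    by_cases ha : a ≤ t
    · cases k with
      | zero => simp [ha]
      | succ k =>
        have := ih h2 k (by simpa using hk)
        simpa [ha] using this
    · have h0 : l.countP (fun x => decide (x ≤ t)) = 0 := by
        rw [List.countP_eq_zero]
        intro x hx hxt
        exact ha ((h1 x hx).trans (by simpa using hxt))
      cases k with
      | zero => simp [ha, h0]
      | succ k =>
        have := ih h2 k (by simpa using hk)
        rw [h0] at this
        rw [List.countP_cons, h0]
        simpa [ha] using this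

theorem aux_orderStat {m : ℕ} (p : Fin m → ℝ) (k : ℕ) (hk : 1 ≤ k) (hkm : k ≤ m) (t : ℝ) :
    orderStat p Finset.univ k ≤ t ↔ k ≤ (Finset.univ.filter (fun i => p i ≤ t)).card := by
  unfold orderStat
  rw [aux_sorted t _ (Multiset.pairwise_sort _ _) (k - 1) (by simp; omega)]
  have h : (((Finset.univ : Finset (Fin m)).val.map p).sort (· ≤ ·)).countP
      (fun x => decide (x ≤ t)) = (Finset.univ.filter (fun i => p i ≤ t)).card := by
    rw [← Multiset.coe_countP, Multiset.sort_eq, Multiset.countP_map]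
    rfl
  rw [h]
  omega

theorem aux_card_meas {X : Type*} [MeasurableSpace X] {n : ℕ} (p : Fin n → X → Prop)
    [∀ i x, Decidable (p i x)]
    (hp : ∀ i, MeasurableSet {x | p i x}) :
    Measurable (fun x => (Finset.univ.filter (fun i => p i x)).card) := by
  simp_rw [Finset.card_filter]
  refine Finset.measurable_sum _ (fun i _ => ?_)
  exact Measurable.ite (hp i) measurable_const measurable_const

theorem aux_orderStat_meas {m : ℕ} (k : ℕ) (hk : 1 ≤ k) (hkm : k ≤ m) :
    Measurable (fun y : Fin m → ℝ => orderStat y Finset.univ k) := by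
  refine measurable_of_Iic (fun t => ?_)
  have : (fun y : Fin m → ℝ => orderStat y Finset.univ k) ⁻¹' Set.Iic t
      = (fun y : Fin m → ℝ => (Finset.univ.filter (fun i => y i ≤ t)).card) ⁻¹' Set.Ici k := by
    ext y
    simp [aux_orderStat y k hk hkm t]
  rw [this]
  exact aux_card_meas (fun i (y : Fin m → ℝ) => y i ≤ t)
    (fun i => measurableSet_le (measurable_pi_apply i) measurable_const) measurableSet_Ici

theorem aux_lambda_meas (m : ℕ) : Measurable (lambdaFun m) := by
  unfold lambdaFun
  refine Measurable.iInf (fun k => ?_)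
  exact ((aux_orderStat_meas ((k : ℕ) + 1) (by omega) (by omega)).const_mul _).div_const _

theorem aux_count {B : ℕ} (L : Fin B → ℝ) (K : ℕ) :
    (Finset.univ.filter (fun b =>
      (Finset.univ.filter (fun j => L j ≤ L b)).card < K)).card ≤ K := by
  set S := Finset.univ.filter (fun b => (Finset.univ.filter (fun j => L j ≤ L b)).card < K)
    with hS
  rcases S.eq_empty_or_nonempty with h | h
  · simp [h]
  · obtain ⟨b, hb, hmax⟩ := S.exists_max_image L h
    have hb' : (Finset.univ.filter (fun j => L j ≤ L b)).card < K := by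
      simpa [hS] using hb
    refine le_trans (Finset.card_le_card ?_) hb'.le
    intro j hj
    simpa using hmax j hj

/-- Validity of the calibrated Simes method (Blanchard, Neuvial and Roquain,
2020): if `p⁽¹⁾,…,p⁽ᴮ⁾` are exchangeable random vectors in `[0,1]^m` with
`p⁽¹⁾` the observed null p-value vector, and `λ*` is the `⌊αB⌋`-th smallest
of the statistics `λ(p⁽ᵇ⁾)` (with `λ* = 0` if `⌊αB⌋ = 0`), then the
calibrated Simes family `(λ*·k/m)ₖ` controls the Joint Error Rate at
level `α`. -/
theorem calibrated_simes_JER_control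
    {Ω : Type*} [MeasurableSpace Ω] (μ : Measure Ω) [IsProbabilityMeasure μ]
    (m B : ℕ) (hm : 0 < m) (hB : 0 < B) (α : ℝ) (hα : α ∈ Set.Ioo (0 : ℝ) 1)
    (P : Fin B → Ω → Fin m → ℝ)
    (hmeas : ∀ b, Measurable (P b))
    (hrange : ∀ b ω i, P b ω i ∈ Set.Icc (0 : ℝ) 1)
    (hexch : ∀ σ : Equiv.Perm (Fin B),
      Measure.map (fun ω => fun b => P (σ b) ω) μ = Measure.map (fun ω => fun b => P b ω) μ) :
    μ {ω | ∃ k ∈ Finset.Icc 1 m,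
        orderStat (P ⟨0, hB⟩ ω) Finset.univ k <
          (if ⌊α * B⌋₊ = 0 then 0 else
            orderStat (fun b => lambdaFun m (P b ω)) Finset.univ ⌊α * B⌋₊) * k / m}
      ≤ ENNReal.ofReal α := by
  set K := ⌊α * B⌋₊ with hK
  have hαB : 0 ≤ α * B := mul_nonneg hα.1.le (Nat.cast_nonneg _)
  have hKle : (K : ℝ) ≤ α * B := Nat.floor_le hαB
  have hBR : (0 : ℝ) < B := by exact_mod_cast hB
  have hKB : K ≤ B := by
    have : (K : ℝ) ≤ B := hKle.trans (by nlinarith [hα.2])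
    exact_mod_cast this
  have hmR : (0 : ℝ) < m := by exact_mod_cast hm
  let A : Fin B → Set (Fin B → Fin m → ℝ) := fun b =>
    {x | (Finset.univ.filter (fun j => lambdaFun m (x j) ≤ lambdaFun m (x b))).card < K}
  have hA : ∀ b, MeasurableSet (A b) := fun b =>
    (aux_card_meas (fun j (x : Fin B → Fin m → ℝ) => lambdaFun m (x j) ≤ lambdaFun m (x b))
      (fun j => measurableSet_le ((aux_lambda_meas m).comp (measurable_pi_apply j))
        ((aux_lambda_meas m).comp (measurable_pi_apply b)))) (measurableSet_Iio (a := K))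
  let V : Ω → Fin B → Fin m → ℝ := fun ω b => P b ω
  have hV : Measurable V := measurable_pi_lambda _ hmeas
  let o : Fin B := ⟨0, hB⟩
  have hsub : {ω | ∃ k ∈ Finset.Icc 1 m,
        orderStat (P ⟨0, hB⟩ ω) Finset.univ k <
          (if K = 0 then 0 else
            orderStat (fun b => lambdaFun m (P b ω)) Finset.univ K) * k / m} ⊆ V ⁻¹' (A o) := by
    rintro ω ⟨k, hk, hlt⟩
    rw [Finset.mem_Icc] at hk
    have hkR : (0 : ℝ) < k := by exact_mod_cast hk.1
    by_cases hK0 : K = 0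
    · exfalso
      rw [if_pos hK0] at hlt
      have h1 := (aux_orderStat _ k hk.1 hk.2 _).1 (le_refl (orderStat (P ⟨0, hB⟩ ω) Finset.univ k))
      obtain ⟨i, hi⟩ := Finset.card_pos.1 (lt_of_lt_of_le hk.1 h1)
      have h2 := (Finset.mem_filter.1 hi).2
      have h3 := (hrange ⟨0, hB⟩ ω i).1
      simp only [zero_mul, zero_div] at hlt
      linarith
    · rw [if_neg hK0] at hlt
      set l := orderStat (fun b => lambdaFun m (P b ω)) Finset.univ K with hl
      have hlam : lambdaFun m (P o ω) < l := by
        have h1 : lambdaFun m (P o ω) ≤ (m : ℝ) * orderStat (P o ω) Finset.univ k / k := by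
          have h := ciInf_le (Set.finite_range (fun k : Fin m =>
            (m : ℝ) * orderStat (P o ω) Finset.univ ((k : ℕ) + 1) / ((k : ℕ) + 1))).bddBelow
            ⟨k - 1, by omega⟩
          have hk1 : k - 1 + 1 = k := by omega
          have hk2 : ((k - 1 : ℕ) : ℝ) + 1 = k := by exact_mod_cast hk1
          simp only [hk1, hk2] at h
          exact h
        refine h1.trans_lt ?_
        rw [div_lt_iff₀ hkR]
        rw [lt_div_iff₀ hmR] at hlt
        rw [mul_comm]
        exact hlt
      have h2 := (aux_orderStat (fun b => lambdaFun m (P b ω)) K (by omega) hKB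
        (lambdaFun m (P o ω))).not.1 (not_le.2 hlam)
      exact not_le.1 h2
  have heq : ∀ b, μ (V ⁻¹' (A b)) = μ (V ⁻¹' (A o)) := by
    intro b
    have h := congrArg (fun ν => ν (A o)) (hexch (Equiv.swap o b))
    rw [Measure.map_apply (measurable_pi_lambda _ (fun c => hmeas _)) (hA o),
      Measure.map_apply hV (hA o)] at h
    rw [← h]
    congr 1
    ext ω
    simp only [Set.mem_preimage, A, V, Set.mem_ofPred_eq, Equiv.swap_apply_left]
    have hc : (Finset.univ.filter (fun j => lambdaFun m (P j ω) ≤ lambdaFun m (P b ω))).card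
        = (Finset.univ.filter (fun j => lambdaFun m (P (Equiv.swap o b j) ω)
          ≤ lambdaFun m (P b ω))).card := by
      simp_rw [Finset.card_filter]
      exact (Equiv.sum_comp (Equiv.swap o b)
        (fun j => if lambdaFun m (P j ω) ≤ lambdaFun m (P b ω) then 1 else 0)).symm
    rw [hc]
  have hsum : ∑ b, μ (V ⁻¹' (A b)) ≤ K := by
    calc ∑ b, μ (V ⁻¹' (A b)) = ∑ b, ∫⁻ ω, (V ⁻¹' (A b)).indicator 1 ω ∂μ := by
          refine Finset.sum_congr rfl (fun b _ => ?_)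
          rw [lintegral_indicator_one (hV (hA b))]
      _ = ∫⁻ ω, ∑ b, (V ⁻¹' (A b)).indicator 1 ω ∂μ := by
          rw [lintegral_finsetSum]
          exact fun b _ => measurable_one.indicator (hV (hA b))
      _ ≤ ∫⁻ ω, (K : ENNReal) ∂μ := by
          refine lintegral_mono (fun ω => ?_)
          have h := aux_count (fun b => lambdaFun m (P b ω)) K
          have h' : ∑ b, (V ⁻¹' (A b)).indicator (1 : Ω → ENNReal) ω
            = ((Finset.univ.filter (fun b => (Finset.univ.filter (fun j =>
              lambdaFun m (P j ω) ≤ lambdaFun m (P b ω))).card < K)).card : ENNReal) := by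
            rw [Finset.card_filter]
            push_cast
            refine Finset.sum_congr rfl (fun b _ => ?_)
            simp only [Set.indicator, Set.mem_preimage, A, V, Set.mem_ofPred_eq, Pi.one_apply]
          simp only [h']
          exact_mod_cast h
      _ = K := by simp
  have hfin : (B : ENNReal) * μ (V ⁻¹' (A o)) ≤ K := by
    simpa [heq] using hsum
  refine (measure_mono hsub).trans ?_
  have h1 : (K : ENNReal) ≤ B * ENNReal.ofReal α := by
    rw [← ENNReal.ofReal_natCast K, ← ENNReal.ofReal_natCast B,
      ← ENNReal.ofReal_mul (Nat.cast_nonneg _)]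
    exact ENNReal.ofReal_le_ofReal (by linarith)
  exact (ENNReal.mul_le_mul_iff_right (by exact_mod_cast hB.ne') (by simp)).1 (hfin.trans h1)
end
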